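/- With the grading of g given by wght(Y) = 1, wght(H) = wght(E) = 0, wght(X) = −1, wght(ε_i) = −i, wght(η) = 5−2n (so that m = span{X, ε_1, …, ε_{2n−6}, η} and g⁰ = span{Y, H, E}), there exists a linear invariant normalization condition for (m, g): a linear subspace N ⊆ C²₊(m,g), invariant under the g⁰-action, spanned by weight-homogeneous elements, with C²₊(m,g) = N ⊕ ∂(C¹₊(m,g)). -/

import Mathlib

noncomputable section

open scoped BigOperators

/-- The underlying vector space of `gl₂(ℝ)`, with basis `Y, H, E, X` at indices `0,1,2,3`. -/
abbrev G2 : Type := Fin 4 → ℝ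

/-- The underlying vector space of the Heisenberg algebra `heis_{2n-5}`:
coefficients of `ε_1, …, ε_{2n-6}` together with the coefficient of `η`. -/
abbrev Hs (n : ℕ) : Type := (Fin (2*n-6) → ℝ) × ℝ

/-- The underlying vector space of `g = gl₂(ℝ) ⋉ heis_{2n-5}`. -/
abbrev Gg (n : ℕ) : Type := G2 × Hs n

/-- The basis vector `ε_p` (1-based index `p`). -/
def epsV (n : ℕ) (p : ℕ) : Hs n := (fun i => if i.val + 1 = p then 1 else 0, 0)

/-- The central basis vector `η`. -/
def etaV (n : ℕ) : Hs n := (0, 1)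

/-- The Heisenberg bracket, encoding `[ε_i, ε_{2n-5-i}] = (-1)^i η`. -/
def heisBr (n : ℕ) (x y : Hs n) : Hs n :=
  (0, ∑ i : Fin (2*n-6), (-1 : ℝ)^(i.val+1) * x.1 i * y.1 i.rev)

/-- The `gl₂(ℝ)` bracket: `[X,Y]=H`, `[H,X]=2X`, `[H,Y]=-2Y`, and `E` is central. -/
def gl2Br (a b : G2) : G2 :=
  ![-2*(a 1 * b 0 - a 0 * b 1), a 3 * b 0 - a 0 * b 3, 0, 2*(a 1 * b 3 - a 3 * b 1)]

/-- The map `φ : gl₂(ℝ) → End(heis_{2n-5})` from the paper. -/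
def phi (n : ℕ) (a : G2) (v : Hs n) : Hs n :=
  (fun i =>
      a 1 * (2*(i.val:ℝ) + 7 - 2*(n:ℝ)) * v.1 i
    + a 2 * v.1 i
    + a 3 * (if h : 0 < i.val then v.1 ⟨i.val - 1, by have := i.isLt; omega⟩ else 0)
    + a 0 * (((i.val:ℝ)+1) * (2*(n:ℝ) - 7 - (i.val:ℝ))) *
        (if h : i.val + 1 < 2*n-6 then v.1 ⟨i.val+1, h⟩ else 0),
   2 * a 2 * v.2)

/-- The bracket of the semidirect product `g = gl₂(ℝ) ⋉_φ heis_{2n-5}`. -/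
def gBr (n : ℕ) (x y : Gg n) : Gg n :=
  (gl2Br x.1 y.1, phi n x.1 y.2 - phi n y.1 x.2 + heisBr n x.2 y.2)

def bY (n : ℕ) : Gg n := (![1,0,0,0], 0)
def bH (n : ℕ) : Gg n := (![0,1,0,0], 0)
def bE (n : ℕ) : Gg n := (![0,0,1,0], 0)
def bX (n : ℕ) : Gg n := (![0,0,0,1], 0)
def bEps (n : ℕ) (p : ℕ) : Gg n := (0, epsV n p)
def bEta (n : ℕ) : Gg n := (0, etaV n)

/-- The weight-`w` graded component of `g` in the grading of `s^{k,n}`: the span of the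
basis elements of weight `w`, where `wght Y = 1`, `wght H = wght E = 0`, `wght X = -1`,
`wght ε_p = n-4-k-p`, `wght η = -3-2k`. -/
def gComp (n k : ℕ) (w : ℤ) : Submodule ℝ (Gg n) :=
  Submodule.span ℝ {v : Gg n |
    (v = bY n ∧ w = 1) ∨ ((v = bH n ∨ v = bE n) ∧ w = 0) ∨ (v = bX n ∧ w = -1) ∨
    (∃ p : ℕ, 1 ≤ p ∧ p ≤ 2*n-6 ∧ v = bEps n p ∧ w = (n:ℤ) - 4 - (k:ℤ) - (p:ℤ)) ∨
    (v = bEta n ∧ w = -3 - 2*(k:ℤ))}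

/-- The negative part `m = s^{k,n}` of `g` (for `0 ≤ k ≤ n-4`): the span of the basis
elements of negative weight, i.e. of `X`, `ε_p` for `n-3-k ≤ p ≤ 2n-6`, and `η`. -/
def mSub (n k : ℕ) : Submodule ℝ (Gg n) where
  carrier := {x | x.1 0 = 0 ∧ x.1 1 = 0 ∧ x.1 2 = 0 ∧
    ∀ i : Fin (2*n-6), ((i.val:ℤ) + 1 < (n:ℤ) - 3 - (k:ℤ) → x.2.1 i = 0)}
  add_mem' := by
    rintro a b ⟨ha0, ha1, ha2, ha3⟩ ⟨hb0, hb1, hb2, hb3⟩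
    exact ⟨by simp [ha0, hb0], by simp [ha1, hb1], by simp [ha2, hb2],
      fun i hi => by simp [ha3 i hi, hb3 i hi]⟩
  zero_mem' := ⟨rfl, rfl, rfl, fun i _ => rfl⟩
  smul_mem' := by
    rintro c a ⟨ha0, ha1, ha2, ha3⟩
    exact ⟨by simp [ha0], by simp [ha1], by simp [ha2], fun i hi => by simp [ha3 i hi]⟩

/-- The non-negative part `g⁰` of `g` in the grading of `s^{k,n}`. -/
def g0Sub (n k : ℕ) : Submodule ℝ (Gg n) where
  carrier := {x | x.1 3 = 0 ∧ x.2.2 = 0 ∧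
    ∀ i : Fin (2*n-6), ((n:ℤ) - 3 - (k:ℤ) ≤ (i.val:ℤ) + 1 → x.2.1 i = 0)}
  add_mem' := by
    rintro a b ⟨ha0, ha1, ha3⟩ ⟨hb0, hb1, hb3⟩
    exact ⟨by simp [ha0, hb0], by simp [ha1, hb1], fun i hi => by simp [ha3 i hi, hb3 i hi]⟩
  zero_mem' := ⟨rfl, rfl, fun i _ => rfl⟩
  smul_mem' := by
    rintro c a ⟨ha0, ha1, ha3⟩
    exact ⟨by simp [ha0], by simp [ha1], fun i hi => by simp [ha3 i hi]⟩

/-- The negative part `m` of `g`, as a type. -/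
abbrev MT (n k : ℕ) := ↥(mSub n k)

/-- The projection `π_m : g → m` along `g⁰`. -/
def Pm (n k : ℕ) (x : Gg n) : Gg n :=
  (![0, 0, 0, x.1 3],
   (fun i => if (n:ℤ) - 3 - (k:ℤ) ≤ (i.val:ℤ) + 1 then x.2.1 i else 0, x.2.2))

lemma Pm_mem (n k : ℕ) (x : Gg n) : Pm n k x ∈ mSub n k := by
  refine ⟨?_, ?_, ?_, fun i hi => ?_⟩
  · simp [Pm]
  · simp [Pm]
  · simp [Pm]
  · show (if (n:ℤ) - 3 - (k:ℤ) ≤ (i.val:ℤ) + 1 then x.2.1 i else 0) = 0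
    rw [if_neg (by omega)]

/-- The projection `π_m : g → m`, viewed as a map into `m`. -/
def ptoM (n k : ℕ) (x : Gg n) : MT n k := ⟨Pm n k x, Pm_mem n k x⟩

/-- The Lie bracket of `m` (the bracket of `g` restricted to `m`; since `m` is closed
under the bracket, composing with the projection `π_m` does not change the value). -/
def mBrM (n k : ℕ) (x y : MT n k) : MT n k := ptoM n k (gBr n x.1 y.1)

/-- `ψ` is an ℝ-linear map `m → g`, i.e. an element of `C¹(m,g)`. -/
def IsLin1 (n k : ℕ) (ψ : MT n k → Gg n) : Prop :=
  (∀ x y, ψ (x + y) = ψ x + ψ y) ∧ ∀ (c : ℝ) (x), ψ (c • x) = c • ψ x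

/-- `ψ` is an alternating ℝ-bilinear map `m × m → g`, i.e. an element of `C²(m,g)`. -/
def IsAlt2 (n k : ℕ) (ψ : MT n k → MT n k → Gg n) : Prop :=
  (∀ y, IsLin1 n k (fun x => ψ x y)) ∧ (∀ x, IsLin1 n k (ψ x)) ∧ ∀ x, ψ x x = 0

/-- The coboundary `∂ : C¹(m,g) → C²(m,g)`,
`(∂φ)(x,y) = [x, φ y] - [y, φ x] + φ [x,y]`. -/
def cobound (n k : ℕ) (φ : MT n k → Gg n) : MT n k → MT n k → Gg n :=
  fun x y => gBr n x.1 (φ y) - gBr n y.1 (φ x) + φ (mBrM n k x y)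

/-- A 1-cochain is homogeneous of weight `w` if `ψ(g_p) ⊆ g_{p+w}` for all `p < 0`. -/
def Homog1 (n k : ℕ) (w : ℤ) (ψ : MT n k → Gg n) : Prop :=
  ∀ p : ℤ, p < 0 → ∀ x : MT n k, (x : Gg n) ∈ gComp n k p → ψ x ∈ gComp n k (p + w)

/-- A 2-cochain is homogeneous of weight `w` if `ψ(g_p × g_q) ⊆ g_{p+q+w}` for `p,q < 0`. -/
def Homog2 (n k : ℕ) (w : ℤ) (ψ : MT n k → MT n k → Gg n) : Prop :=
  ∀ p q : ℤ, p < 0 → q < 0 → ∀ x y : MT n k,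
    (x : Gg n) ∈ gComp n k p → (y : Gg n) ∈ gComp n k q → ψ x y ∈ gComp n k (p + q + w)

/-- `C¹₊(m,g)`: the span of the homogeneous 1-cochains of positive weight. -/
def C1plus (n k : ℕ) : Submodule ℝ (MT n k → Gg n) :=
  Submodule.span ℝ {ψ | IsLin1 n k ψ ∧ ∃ w : ℤ, 0 < w ∧ Homog1 n k w ψ}

/-- `C²₊(m,g)`: the span of the homogeneous alternating 2-cochains of positive weight. -/
def C2plus (n k : ℕ) : Submodule ℝ (MT n k → MT n k → Gg n) :=
  Submodule.span ℝ {ψ | IsAlt2 n k ψ ∧ ∃ w : ℤ, 0 < w ∧ Homog2 n k w ψ}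

/-- The image `∂(C¹₊(m,g)) ⊆ C²(m,g)`. -/
def imDel (n k : ℕ) : Submodule ℝ (MT n k → MT n k → Gg n) :=
  Submodule.span ℝ (cobound n k '' {φ | φ ∈ C1plus n k})

/-- The action of `A ∈ g⁰` on 1-cochains: `(A·ψ)(x) = [A, ψ x] - ψ(π_m [A, x])`. -/
def act1 (n k : ℕ) (A : Gg n) (ψ : MT n k → Gg n) : MT n k → Gg n :=
  fun x => gBr n A (ψ x) - ψ (ptoM n k (gBr n A x.1))

/-- The action of `A ∈ g⁰` on 2-cochains:
`(A·ψ)(x,y) = [A, ψ x y] - ψ(π_m [A, x]) y - ψ x (π_m [A, y])`. -/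
def act2 (n k : ℕ) (A : Gg n) (ψ : MT n k → MT n k → Gg n) : MT n k → MT n k → Gg n :=
  fun x y => gBr n A (ψ x y) - ψ (ptoM n k (gBr n A x.1)) y - ψ x (ptoM n k (gBr n A y.1))

/-- The coefficient of `ε_p` (the dual functional `ε*_p`). -/
def epsCoef (n : ℕ) (p : ℕ) (x : Gg n) : ℝ :=
  if h : 1 ≤ p ∧ p ≤ 2*n-6 then x.2.1 ⟨p-1, by omega⟩ else 0

/-- The 1-cochain `ε*_{n-3-k} ⊗ ε_{2n-6}`. -/
def cA (n k : ℕ) : MT n k → Gg n := fun x => epsCoef n (n-3-k) x.1 • bEps n (2*n-6)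

/-- The 1-cochain `X* ⊗ ε_{n-4-k}`. -/
def cB (n k : ℕ) : MT n k → Gg n := fun x => (x : Gg n).1 3 • bEps n (n-4-k)

/-- The 2-cochain `X* ∧ ε*_{n-1+k} ⊗ η`. -/
def cC (n k : ℕ) : MT n k → MT n k → Gg n := fun x y =>
  ((x : Gg n).1 3 * epsCoef n (n-1+k) y.1 - (y : Gg n).1 3 * epsCoef n (n-1+k) x.1) • bEta n

/-- The 2-cochain `ε*_{n-3-k} ∧ η* ⊗ ε_{2n-6}`. -/
def cD (n k : ℕ) : MT n k → MT n k → Gg n := fun x y =>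
  (epsCoef n (n-3-k) x.1 * (y : Gg n).2.2 - epsCoef n (n-3-k) y.1 * (x : Gg n).2.2) • bEps n (2*n-6)

set_option synthInstance.maxHeartbeats 1000000

/-
The inner product on `g` for which `Y, H, E, X, ε_i, η` are orthogonal, with suitable norms, makes
`ad X` adjoint to `ad Y` and makes `ad H` and `ad E` self-adjoint. It induces an inner product on
2-cochains in which cochains of different weights are orthogonal and the adjoint of the action of
`a ∈ gl₂(ℝ)` is the action of its transpose. When `a ∈ span {Y, H, E}`, the transpose lies in
`span {X, H, E}`, hence normalizes `m`, hence commutes with `∂` and preserves the coboundaries. So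
the weightwise orthogonal complement of the coboundaries is preserved by `a`.
-/

section OrthogonalComplement

variable {K V ι : Type*} [Field K] [AddCommGroup V] [Module K V] {B : LinearMap.BilinForm K V}

lemma inf_orthogonal_sup_eq (hB : B.IsSymm) {D E : Submodule K V} [FiniteDimensional K D]
    (hDE : D ≤ E) (hD : ∀ x ∈ D, B x x = 0 → x = 0) : E ⊓ B.orthogonal D ⊔ D = E := by
  refine le_antisymm (sup_le inf_le_left hDE) fun x hx ↦ ?_
  have hinj : Function.Injective (B.restrict D) := by
    rw [← LinearMap.ker_eq_bot, LinearMap.ker_eq_bot']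
    exact fun d hd ↦ Subtype.ext (hD d d.2 (by simpa using LinearMap.congr_fun hd d))
  obtain ⟨d, hd⟩ := (LinearMap.injective_iff_surjective_of_finrank_eq_finrank
    (Subspace.dual_finrank_eq (K := K) (V := D)).symm).1 hinj ((B x).domRestrict D)
  have hsub : x - d ∈ E ⊓ B.orthogonal D := by
    refine ⟨E.sub_mem hx (hDE d.2), fun y hy ↦ ?_⟩
    have : B d y = B x y := LinearMap.congr_fun hd ⟨y, hy⟩
    simp [hB.eq y, this]
  exact Submodule.mem_sup.2 ⟨x - d, hsub, d, d.2, sub_add_cancel _ _⟩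

lemma iSup_inf_orthogonal_sup_iSup (hB : B.IsSymm) {D E : ι → Submodule K V}
    [∀ i, FiniteDimensional K (D i)] (hDE : ∀ i, D i ≤ E i)
    (hD : ∀ i, ∀ x ∈ D i, B x x = 0 → x = 0) :
    (⨆ i, E i ⊓ B.orthogonal (D i)) ⊔ ⨆ i, D i = ⨆ i, E i := by
  rw [← iSup_sup_eq]
  exact iSup_congr fun i ↦ inf_orthogonal_sup_eq hB (hDE i) (hD i)

lemma disjoint_iSup_inf_orthogonal_iSup {D E : ι → Submodule K V}
    (hDE : ∀ i, D i ≤ E i) (hE : ∀ i j, i ≠ j → ∀ x ∈ E i, ∀ y ∈ E j, B x y = 0)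
    (hD : ∀ x ∈ ⨆ i, D i, B x x = 0 → x = 0) :
    Disjoint (⨆ i, E i ⊓ B.orthogonal (D i)) (⨆ i, D i) := by
  have hort : ⨆ i, E i ⊓ B.orthogonal (D i) ≤ B.orthogonal (⨆ i, D i) := by
    refine iSup_le fun i x hx y hy ↦ ?_
    have hle : ⨆ j, D j ≤ LinearMap.ker (B.flip x) := by
      refine iSup_le fun j z hz ↦ ?_
      rcases eq_or_ne j i with rfl | hji
      · exact hx.2 z hz
      · exact hE j i hji z (hDE j hz) x hx.1
    exact hle hy
  rw [Submodule.disjoint_def]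
  exact fun x hx hx' ↦ hD x hx' (hort hx x hx')

end OrthogonalComplement

section WeightedForm

variable {R ι X W M : Type*} [Fintype ι]

section CommRing

variable [CommRing R] [AddCommGroup W] [Module R W]

/-- The bilinear form `(f, g) ↦ ∑ i, c i * Q (f (p i)) (g (p i))` on functions `X → W`, obtained
from a form `Q` on `W`, sample points `p i` and weights `c i`. Used with `W = R` it gives a diagonal
form, and iterated it gives the pairing of two-argument cochains. -/
def weightedForm (c : ι → R) (p : ι → X) (Q : LinearMap.BilinForm R W) :
    LinearMap.BilinForm R (X → W) :=
  ∑ i, c i • Q.comp (LinearMap.proj (p i)) (LinearMap.proj (p i))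

variable {c : ι → R} {p : ι → X} {Q : LinearMap.BilinForm R W}

lemma weightedForm_apply (f g : X → W) :
    weightedForm c p Q f g = ∑ i, c i * Q (f (p i)) (g (p i)) := by
  simp [weightedForm, LinearMap.sum_apply]

lemma isSymm_weightedForm (hQ : Q.IsSymm) : (weightedForm c p Q).IsSymm :=
  ⟨fun f g ↦ by simp only [weightedForm_apply, hQ.eq]⟩

variable [AddCommGroup M] [Module R M]

/-- The vectors `p i` with weights `c i` form a tight frame for `Q`: every `x` is equal to
`∑ i, (c i * Q (p i) x) • p i`. This plays the role of an orthogonal basis, but zero vectors are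
allowed. -/
def IsTightFrame (Q : LinearMap.BilinForm R M) (c : ι → R) (p : ι → M) : Prop :=
  ∀ x, ∑ i, (c i * Q (p i) x) • p i = x

variable {q : LinearMap.BilinForm R M} {e : ι → M}

lemma IsTightFrame.span_eq_top (he : IsTightFrame q c e) : Submodule.span R (Set.range e) = ⊤ :=
  eq_top_iff.2 fun x _ ↦ he x ▸ Submodule.sum_mem _ fun i _ ↦
    Submodule.smul_mem _ _ (Submodule.subset_span ⟨i, rfl⟩)

lemma IsTightFrame.sum_apply_of_isAdjointPair (he : IsTightFrame q c e) (hq : q.IsSymm)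
    {T S : M →ₗ[R] M} (hTS : LinearMap.IsAdjointPair q q T S) (F : M →ₗ[R] M →ₗ[R] R) :
    ∑ i, c i * F (T (e i)) (e i) = ∑ i, c i * F (e i) (S (e i)) := by
  have hT (i : ι) : F (T (e i)) (e i) = ∑ j, c j * q (e j) (T (e i)) * F (e j) (e i) := by
    conv_lhs => rw [← he (T (e i))]
    simp [LinearMap.sum_apply]
  have hS (j : ι) : F (e j) (S (e j)) = ∑ i, c i * q (e i) (S (e j)) * F (e j) (e i) := by
    conv_lhs => rw [← he (S (e j))]
    simp
  have hadj (i j : ι) : q (e j) (T (e i)) = q (e i) (S (e j)) := by rw [← hTS, hq.eq]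
  simp_rw [hT, hS, Finset.mul_sum, hadj]
  rw [Finset.sum_comm]
  exact Finset.sum_congr rfl fun _ _ ↦ Finset.sum_congr rfl fun _ _ ↦ by ring

lemma IsTightFrame.weightedForm_comp (he : IsTightFrame q c e) (hq : q.IsSymm)
    {T S : M →ₗ[R] M} (hTS : LinearMap.IsAdjointPair q q T S) (f g : M →ₗ[R] W) :
    weightedForm c e Q (f ∘ₗ T) g = weightedForm c e Q f (g ∘ₗ S) := by
  simp only [weightedForm_apply]
  exact he.sum_apply_of_isAdjointPair hq hTS (LinearMap.compl₁₂ Q f g)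

lemma IsTightFrame.weightedForm_comp_left (he : IsTightFrame q c e) (hq : q.IsSymm)
    {T S : M →ₗ[R] M} (hTS : LinearMap.IsAdjointPair q q T S) (f g : M →ₗ[R] M →ₗ[R] W) :
    weightedForm c e (weightedForm c e Q) (fun x y ↦ f (T x) y) (fun x y ↦ g x y) =
      weightedForm c e (weightedForm c e Q) (fun x y ↦ f x y) (fun x y ↦ g (S x) y) :=
  he.weightedForm_comp hq hTS (LinearMap.ltoFun R M W R ∘ₗ f) (LinearMap.ltoFun R M W R ∘ₗ g)

lemma IsTightFrame.weightedForm_comp_right (he : IsTightFrame q c e) (hq : q.IsSymm)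
    {T S : M →ₗ[R] M} (hTS : LinearMap.IsAdjointPair q q T S) (f g : M →ₗ[R] M →ₗ[R] W) :
    weightedForm c e (weightedForm c e Q) (fun x y ↦ f x (T y)) (fun x y ↦ g x y) =
      weightedForm c e (weightedForm c e Q) (fun x y ↦ f x y) (fun x y ↦ g x (S y)) := by
  rw [weightedForm_apply, weightedForm_apply]
  exact Finset.sum_congr rfl fun i _ ↦ congrArg _ (he.weightedForm_comp hq hTS (f (e i)) (g (e i)))

end CommRing

variable [CommRing R] [LinearOrder R] [IsStrictOrderedRing R] [AddCommGroup W] [Module R W]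
  {c : ι → R} {p : ι → X} {Q : LinearMap.BilinForm R W}

lemma weightedForm_self_nonneg (hc : ∀ i, 0 < c i) (hQ : ∀ x, 0 ≤ Q x x) (f : X → W) :
    0 ≤ weightedForm c p Q f f := by
  rw [weightedForm_apply]
  exact Finset.sum_nonneg fun i _ ↦ mul_nonneg (hc i).le (hQ _)

lemma apply_self_eq_zero_of_weightedForm_self (hc : ∀ i, 0 < c i) (hQ : ∀ x, 0 ≤ Q x x)
    {f : X → W} (hf : weightedForm c p Q f f = 0) (i : ι) : Q (f (p i)) (f (p i)) = 0 := by
  rw [weightedForm_apply,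
    Finset.sum_eq_zero_iff_of_nonneg fun i _ ↦ mul_nonneg (hc i).le (hQ _)] at hf
  exact (mul_eq_zero.1 (hf i (Finset.mem_univ i))).resolve_left (hc i).ne'

end WeightedForm

section Eigenbasis

variable {R M ι : Type*} [CommRing R] [IsDomain R] [AddCommGroup M] [Module R M]

lemma eigenspace_eq_span_image (b : Module.Basis ι R M) {T : Module.End R M} {μ : ι → R}
    (hT : ∀ i, T (b i) = μ i • b i) (r : R) :
    T.eigenspace r = Submodule.span R (b '' {i | μ i = r}) := by
  have hrepr (x : M) (i : ι) : b.repr (T x) i = μ i * b.repr x i := by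
    suffices b.coord i ∘ₗ T = μ i • b.coord i from LinearMap.congr_fun this x
    refine b.ext fun j ↦ ?_
    rcases eq_or_ne j i with rfl | hji <;> simp [*]
  ext x
  rw [Module.End.mem_eigenspace_iff, b.mem_span_image, ← b.repr.injective.eq_iff, Finsupp.ext_iff]
  refine forall_congr' fun i ↦ ?_
  rw [hrepr, map_smul, Finsupp.smul_apply, smul_eq_mul, mul_eq_mul_right_iff, or_iff_not_imp_right]
  simp

end Eigenbasis

section Shift

variable {R : Type*} [CommSemiring R] {N : ℕ}

/-- The shift `e_i ↦ e_{i+1}` of `R^N`, killing the last basis vector. It is the operator by which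
`X` acts on the `ε_i`. -/
def shiftUp : (Fin N → R) →ₗ[R] Fin N → R where
  toFun v i := if h : 0 < i.val then v ⟨i.val - 1, by omega⟩ else 0
  map_add' u v := by ext i; by_cases h : 0 < i.val <;> simp [h]
  map_smul' r v := by ext i; by_cases h : 0 < i.val <;> simp [h]

/-- The shift `e_{i+1} ↦ e_i` of `R^N`, killing the first basis vector. Up to positive factors it
is the operator by which `Y` acts on the `ε_i`. -/
def shiftDown : (Fin N → R) →ₗ[R] Fin N → R where
  toFun v i := if h : i.val + 1 < N then v ⟨i.val + 1, h⟩ else 0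
  map_add' u v := by ext i; by_cases h : i.val + 1 < N <;> simp [h]
  map_smul' r v := by ext i; by_cases h : i.val + 1 < N <;> simp [h]

lemma shiftUp_apply (v : Fin N → R) (i : Fin N) :
    shiftUp v i = if h : 0 < i.val then v ⟨i.val - 1, by omega⟩ else 0 := rfl

lemma shiftDown_apply (v : Fin N → R) (i : Fin N) :
    shiftDown v i = if h : i.val + 1 < N then v ⟨i.val + 1, h⟩ else 0 := rfl

lemma shiftUp_rev (v : Fin N → R) (i : Fin N) :
    shiftUp v i.rev = shiftDown (fun j ↦ v j.rev) i := by
  rw [shiftUp_apply, shiftDown_apply]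
  split_ifs with h h' h'
  · congr 1
  all_goals first | rfl | (simp only [Fin.val_rev] at h; omega)

lemma shiftDown_rev (v : Fin N → R) (i : Fin N) :
    shiftDown v i.rev = shiftUp (fun j ↦ v j.rev) i := by
  simpa using (shiftUp_rev (fun j ↦ v j.rev) i.rev).symm

lemma sum_shiftUp_mul (u v : Fin N → R) :
    ∑ i, shiftUp u i * v i = ∑ i, u i * shiftDown v i := by
  cases N with
  | zero => rfl
  | succ N =>
    rw [Fin.sum_univ_succ, Fin.sum_univ_castSucc]
    have hup (i : Fin N) : shiftUp u i.succ = u i.castSucc :=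
      (shiftUp_apply u _).trans (dif_pos i.val.succ_pos)
    have hdown (i : Fin N) : shiftDown v i.castSucc = v i.succ :=
      (shiftDown_apply v _).trans (dif_pos (Nat.succ_lt_succ i.2))
    have hzero : shiftUp u 0 = 0 := (shiftUp_apply u _).trans (dif_neg (lt_irrefl 0))
    have hlast : shiftDown v (Fin.last N) = 0 :=
      (shiftDown_apply v _).trans (dif_neg (lt_irrefl _))
    simp only [hup, hdown, hzero, hlast, zero_mul, mul_zero, zero_add, add_zero]

lemma shiftDown_mul {a b : Fin N → R} (hab : ∀ i (h : i + 1 < N), a ⟨i + 1, h⟩ = b ⟨i, by omega⟩)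
    (v : Fin N → R) (i : Fin N) : shiftDown (fun j ↦ a j * v j) i = b i * shiftDown v i := by
  simp only [shiftDown_apply]
  split_ifs with h
  · rw [hab i h]
  · rw [mul_zero]

end Shift

section Bracket

variable {n : ℕ}

/-- The factor `φ(H) ε_{i+1} = hCoeff n i • ε_{i+1}`. -/
def hCoeff (n i : ℕ) : ℝ := 2 * i + 7 - 2 * n

/-- The factor `φ(Y) ε_{i+2} = yCoeff n i • ε_{i+1}`. -/
def yCoeff (n i : ℕ) : ℝ := (i + 1) * (2 * n - 7 - i)

/-- The operator by which `H` acts on the `ε_i`. -/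
def hOp (n : ℕ) : Module.End ℝ (Fin (2 * n - 6) → ℝ) :=
  LinearMap.mulLeft ℝ fun i ↦ hCoeff n i

/-- The operator by which `Y` acts on the `ε_i`. -/
def yOp (n : ℕ) : Module.End ℝ (Fin (2 * n - 6) → ℝ) :=
  LinearMap.mulLeft ℝ (fun i ↦ yCoeff n i) ∘ₗ shiftDown

lemma hOp_apply (v : Fin (2 * n - 6) → ℝ) (i : Fin (2 * n - 6)) :
    hOp n v i = hCoeff n i * v i := rfl

lemma yOp_apply (v : Fin (2 * n - 6) → ℝ) (i : Fin (2 * n - 6)) :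
    yOp n v i = yCoeff n i * shiftDown v i := rfl

lemma hOp_shiftUp (v : Fin (2 * n - 6) → ℝ) :
    hOp n (shiftUp v) = shiftUp (hOp n v) + (2 : ℝ) • shiftUp v := by
  ext i
  simp only [hOp_apply, hCoeff, shiftUp_apply, Pi.add_apply, Pi.smul_apply, smul_eq_mul]
  split_ifs with h
  · rw [Nat.cast_pred h]; ring
  · ring

lemma hOp_yOp (v : Fin (2 * n - 6) → ℝ) :
    hOp n (yOp n v) = yOp n (hOp n v) - (2 : ℝ) • yOp n v := by
  ext i
  simp only [hOp_apply, yOp_apply, hCoeff, shiftDown_apply, Pi.sub_apply, Pi.smul_apply,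
    smul_eq_mul]
  split_ifs with h
  · push_cast; ring
  · ring

/-- The relation `[X, Y] = H` holds at both ends of the range of indices because the products
`i * (2 * n - 6 - i)` vanish there. -/
lemma shiftUp_yOp (v : Fin (2 * n - 6) → ℝ) :
    shiftUp (yOp n v) = yOp n (shiftUp v) + hOp n v := by
  ext i
  have hup : shiftUp (yOp n v) i = i * (2 * n - 6 - i) * v i := by
    rcases i with ⟨_ | i, hi⟩
    · simp [shiftUp_apply]
    · simp only [shiftUp_apply, yOp_apply, shiftDown_apply, yCoeff, Nat.succ_pos, hi,
        Nat.add_sub_cancel, dif_pos]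
      push_cast
      ring
  have hdown : yOp n (shiftUp v) i = (i + 1) * (2 * n - 6 - (i + 1)) * v i := by
    simp only [yOp_apply, shiftUp_apply, shiftDown_apply, yCoeff]
    split_ifs with hi hpos
    · simp only [Nat.add_sub_cancel]
      ring
    · omega
    · have htop : i.val + 7 = 2 * n := by omega
      have htop : (i.val : ℝ) + 7 = 2 * n := mod_cast htop
      rw [← htop]
      ring
  rw [Pi.add_apply, hup, hdown, hOp_apply, hCoeff]
  ring

lemma phi_fst (a : G2) (v : Hs n) :
    (phi n a v).1 = a 1 • hOp n v.1 + a 2 • v.1 + a 3 • shiftUp v.1 + a 0 • yOp n v.1 := by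
  ext i
  simp only [phi, hOp_apply, yOp_apply, hCoeff, yCoeff, shiftUp_apply, shiftDown_apply,
    Pi.add_apply, Pi.smul_apply, smul_eq_mul]
  ring

lemma phi_snd (a : G2) (v : Hs n) : (phi n a v).2 = 2 * a 2 * v.2 := rfl

/-- The bracket of `gl₂(ℝ)` as a bilinear map. -/
def gl2BrL : G2 →ₗ[ℝ] G2 →ₗ[ℝ] G2 :=
  LinearMap.mk₂ ℝ gl2Br
    (fun a b c ↦ by ext i; fin_cases i <;> simp [gl2Br] <;> ring)
    (fun r a b ↦ by ext i; fin_cases i <;> simp [gl2Br] <;> ring)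
    (fun a b c ↦ by ext i; fin_cases i <;> simp [gl2Br] <;> ring)
    (fun r a b ↦ by ext i; fin_cases i <;> simp [gl2Br] <;> ring)

/-- The map `φ` as a bilinear map. -/
def phiL (n : ℕ) : G2 →ₗ[ℝ] Hs n →ₗ[ℝ] Hs n :=
  LinearMap.mk₂ ℝ (phi n)
    (fun a b v ↦ Prod.ext (by simp only [phi_fst, Prod.fst_add, Pi.add_apply]; module)
      (by simp only [phi_snd, Prod.snd_add, Pi.add_apply]; ring))
    (fun r a v ↦ Prod.ext (by simp only [phi_fst, Prod.smul_fst, Pi.smul_apply]; module)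
      (by simp only [phi_snd, Prod.smul_snd, Pi.smul_apply, smul_eq_mul]; ring))
    (fun a u v ↦ Prod.ext (by simp only [phi_fst, Prod.fst_add, map_add]; module)
      (by simp only [phi_snd, Prod.snd_add]; ring))
    (fun r a v ↦ Prod.ext (by simp only [phi_fst, Prod.smul_fst, map_smul]; module)
      (by simp only [phi_snd, Prod.smul_snd, smul_eq_mul]; ring))

/-- The bracket of the Heisenberg algebra as a bilinear map. -/
def heisBrL (n : ℕ) : Hs n →ₗ[ℝ] Hs n →ₗ[ℝ] Hs n :=
  LinearMap.mk₂ ℝ (heisBr n)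
    (fun u v w ↦ by ext <;> simp [heisBr, mul_add, add_mul, Finset.sum_add_distrib])
    (fun r u v ↦ by ext <;> simp [heisBr, Finset.mul_sum, mul_left_comm, mul_assoc])
    (fun u v w ↦ by ext <;> simp [heisBr, mul_add, Finset.sum_add_distrib])
    (fun r u v ↦ by ext <;> simp [heisBr, Finset.mul_sum, mul_left_comm, mul_assoc])

/-- The bracket of `g` as a bilinear map. -/
def gBrL (n : ℕ) : Gg n →ₗ[ℝ] Gg n →ₗ[ℝ] Gg n :=
  let φ := (phiL n).compl₁₂ (LinearMap.fst ℝ G2 (Hs n)) (LinearMap.snd ℝ G2 (Hs n))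
  (gl2BrL.compl₁₂ (LinearMap.fst ℝ G2 (Hs n)) (LinearMap.fst ℝ G2 (Hs n))).compr₂
      (LinearMap.inl ℝ G2 (Hs n)) +
    (φ - φ.flip + (heisBrL n).compl₁₂ (LinearMap.snd ℝ G2 (Hs n))
      (LinearMap.snd ℝ G2 (Hs n))).compr₂ (LinearMap.inr ℝ G2 (Hs n))

lemma gBr_eq_gBrL (x y : Gg n) : gBr n x y = gBrL n x y :=
  Prod.ext (add_zero _).symm (zero_add _).symm

lemma cast_val_rev (i : Fin (2 * n - 6)) : ((i.rev : ℕ) : ℝ) = 2 * n - 7 - i := by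
  have h : i.rev.val + i.val + 7 = 2 * n := by rw [Fin.val_rev]; omega
  have h' : (i.rev.val + i.val + 7 : ℝ) = 2 * n := mod_cast h
  linarith

lemma neg_one_pow_rev (i : Fin (2 * n - 6)) :
    (-1 : ℝ) ^ (i.rev.val + 1) = -(-1 : ℝ) ^ (i.val + 1) := by
  have h : i.rev.val + 1 + (i.val + 1) = 2 * (n - 3) + 1 := by rw [Fin.val_rev]; omega
  have hprod : (-1 : ℝ) ^ (i.rev.val + 1) * (-1) ^ (i.val + 1) = -1 := by
    rw [← pow_add, h, pow_succ, pow_mul]; simp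
  rcases neg_one_pow_eq_or ℝ (i.val + 1) with h' | h' <;> rw [h'] at hprod ⊢ <;> linarith

lemma heisBr_swap (u v : Hs n) : heisBr n u v = -heisBr n v u := by
  refine Prod.ext neg_zero.symm ?_
  simp only [heisBr, Prod.snd_neg]
  rw [← Finset.sum_neg_distrib, ← Equiv.sum_comp Fin.revPerm]
  refine Finset.sum_congr rfl fun i _ ↦ ?_
  rw [Fin.revPerm_apply, Fin.rev_rev, neg_one_pow_rev]
  ring

lemma gBr_self (x : Gg n) : gBr n x x = 0 := by
  refine Prod.ext ?_ ?_
  · ext i; fin_cases i <;> simp [gBr, gl2Br] <;> ring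
  · simpa [gBr] using self_eq_neg.1 (heisBr_swap x.2 x.2)

lemma gBr_gl2 (a : G2) (u : Gg n) : gBr n (a, 0) u = (gl2Br a u.1, phi n a u.2) := by
  refine Prod.ext rfl ?_
  change phi n a u.2 - phiL n u.1 0 + heisBrL n 0 u.2 = phi n a u.2
  rw [map_zero, LinearMap.map_zero₂, sub_zero, add_zero]

lemma phi_gl2Br (a b : G2) (v : Hs n) :
    phi n (gl2Br a b) v = phi n a (phi n b v) - phi n b (phi n a v) := by
  refine Prod.ext ?_ ?_
  · simp only [Prod.fst_sub, phi_fst, map_add, map_smul, hOp_shiftUp, hOp_yOp, shiftUp_yOp, gl2Br,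
      Matrix.cons_val]
    module
  · simp only [phi_snd, Prod.snd_sub, gl2Br, Matrix.cons_val]
    ring

lemma sum_sign_mul_shiftUp (u v : Fin (2 * n - 6) → ℝ) :
    ∑ i, (-1) ^ (i.val + 1) * shiftUp u i * v i.rev =
      -∑ i, (-1) ^ (i.val + 1) * u i * shiftUp v i.rev := by
  have hshift (i : Fin (2 * n - 6)) :
      shiftDown (fun j ↦ (-1) ^ (j.val + 1) * v j.rev) i =
        -(-1) ^ (i.val + 1) * shiftUp v i.rev := by
    rw [shiftUp_rev]
    exact shiftDown_mul (a := fun j ↦ (-1) ^ (j.val + 1)) (b := fun j ↦ -(-1) ^ (j.val + 1))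
      (fun _ _ ↦ by ring) _ i
  calc ∑ i, (-1) ^ (i.val + 1) * shiftUp u i * v i.rev
      = ∑ i, shiftUp u i * ((-1) ^ (i.val + 1) * v i.rev) :=
        Finset.sum_congr rfl fun i _ ↦ by ring
    _ = ∑ i, u i * (-(-1) ^ (i.val + 1) * shiftUp v i.rev) := by
        simp_rw [sum_shiftUp_mul, hshift]
    _ = -∑ i, (-1) ^ (i.val + 1) * u i * shiftUp v i.rev := by
        rw [← Finset.sum_neg_distrib]
        exact Finset.sum_congr rfl fun i _ ↦ by ring

lemma sum_sign_mul_yOp (u v : Fin (2 * n - 6) → ℝ) :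
    ∑ i, (-1) ^ (i.val + 1) * u i * yOp n v i.rev =
      -∑ i, (-1) ^ (i.val + 1) * yOp n u i * v i.rev := by
  have hshift (i : Fin (2 * n - 6)) :
      shiftDown (fun j ↦ (-1) ^ (j.val + 1) * yCoeff n j.rev * u j) i =
        -(-1) ^ (i.val + 1) * yCoeff n i * shiftDown u i := by
    refine shiftDown_mul (a := fun j ↦ (-1) ^ (j.val + 1) * yCoeff n j.rev)
      (b := fun j ↦ -(-1) ^ (j.val + 1) * yCoeff n j) (fun j hj ↦ ?_) _ i
    simp only [yCoeff, cast_val_rev]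
    push_cast
    ring
  calc ∑ i, (-1) ^ (i.val + 1) * u i * yOp n v i.rev
      = ∑ i, shiftUp (fun j ↦ v j.rev) i * ((-1) ^ (i.val + 1) * yCoeff n i.rev * u i) := by
        simp_rw [yOp_apply, shiftDown_rev]
        exact Finset.sum_congr rfl fun i _ ↦ by ring
    _ = ∑ i : Fin (2 * n - 6), v i.rev * (-(-1) ^ (i.val + 1) * yCoeff n i * shiftDown u i) := by
        simp_rw [sum_shiftUp_mul, hshift]
    _ = -∑ i, (-1) ^ (i.val + 1) * yOp n u i * v i.rev := by
        rw [← Finset.sum_neg_distrib]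
        exact Finset.sum_congr rfl fun i _ ↦ by rw [yOp_apply]; ring

lemma phi_heisBr (a : G2) (u v : Hs n) :
    phi n a (heisBr n u v) = heisBr n (phi n a u) v + heisBr n u (phi n a v) := by
  refine Prod.ext ?_ ?_
  · rw [phi_fst]
    simp [heisBr]
  have hH (i : Fin (2 * n - 6)) : hOp n u.1 i * v.1 i.rev = -(u.1 i * hOp n v.1 i.rev) := by
    rw [hOp_apply, hOp_apply, hCoeff, hCoeff, cast_val_rev]
    ring
  have hX := sum_sign_mul_shiftUp u.1 v.1
  have hY := sum_sign_mul_yOp u.1 v.1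
  rw [eq_neg_iff_add_eq_zero, ← Finset.sum_add_distrib] at hX hY
  have hXY := congrArg₂ (fun s t ↦ -a 3 * s - a 0 * t) hX hY
  simp only [mul_zero, sub_zero] at hXY
  refine sub_eq_zero.1 (Eq.trans ?_ hXY)
  simp only [phi_snd, heisBr, Prod.snd_add, phi_fst, Pi.add_apply, Pi.smul_apply, smul_eq_mul,
    Finset.mul_sum, ← Finset.sum_add_distrib, ← Finset.sum_sub_distrib]
  refine Finset.sum_congr rfl fun i _ ↦ ?_
  linear_combination (-(-1) ^ (i.val + 1) * a 1) * hH i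

lemma gl2Br_leibniz (a b c : G2) :
    gl2Br a (gl2Br b c) = gl2Br (gl2Br a b) c + gl2Br b (gl2Br a c) := by
  ext i
  fin_cases i <;> simp [gl2Br] <;> ring

lemma gBr_leibniz (x y z : Gg n) :
    gBr n x (gBr n y z) = gBr n (gBr n x y) z + gBr n y (gBr n x z) := by
  refine Prod.ext (gl2Br_leibniz _ _ _) ?_
  have hphi (a : G2) (v : Hs n) : phi n a v = phiL n a v := rfl
  have hheis (u v : Hs n) : heisBr n u v = heisBrL n u v := rfl
  have hcentral (u v w : Hs n) : heisBrL n u (heisBrL n v w) = 0 := by simp [← hheis, heisBr]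
  have hlie (a b : G2) (v : Hs n) :
      phiL n (gl2Br a b) v = phiL n a (phiL n b v) - phiL n b (phiL n a v) := phi_gl2Br a b v
  have hder (a : G2) (u v : Hs n) :
      phiL n a (heisBrL n u v) = heisBrL n (phiL n a u) v + heisBrL n u (phiL n a v) :=
    phi_heisBr a u v
  have hcomm : heisBrL n y.2 (phiL n z.1 x.2) = -heisBrL n (phiL n z.1 x.2) y.2 := heisBr_swap _ _
  have hcentral' : heisBrL n (heisBrL n x.2 y.2) z.2 = 0 := by simp [← hheis, heisBr]
  simp only [gBr, Prod.snd_add, hlie, hphi, hheis, map_add, map_sub, LinearMap.add_apply,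
    LinearMap.sub_apply, hcentral, hcentral', hder, hcomm]
  abel

end Bracket

section Grading

variable {n k : ℕ}

/-- Index set of the basis of `g`: four indices for `Y, H, E, X`, then those of the `ε_i`, then the
index of `η`. -/
abbrev GIndex (n : ℕ) : Type := Fin 4 ⊕ (Fin (2 * n - 6) ⊕ Unit)

/-- The basis `Y, H, E, X, ε_1, …, ε_{2n-6}, η` of `g`. -/
def gBasis (n : ℕ) : Module.Basis (GIndex n) ℝ (Gg n) :=
  (Pi.basisFun ℝ (Fin 4)).prod
    ((Pi.basisFun ℝ (Fin (2 * n - 6))).prod (Module.Basis.singleton Unit ℝ))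

/-- The weight of a basis vector of `g`. -/
def gWeight (n k : ℕ) : GIndex n → ℤ
  | .inl i => ![1, 0, 0, -1] i
  | .inr (.inl i) => n - 4 - k - (i.val + 1)
  | .inr (.inr _) => -3 - 2 * k

/-- The grading element `Z` of `g`, for which `ad Z` multiplies each basis vector by its weight. -/
def gradingElt (n k : ℕ) : Gg n := (![0, -1 / 2, -(3 + 2 * k) / 2, 0], 0)

lemma gBasis_inl (i : Fin 4) : gBasis n (.inl i) = (Pi.single i 1, 0) := by
  ext <;> simp [gBasis]

lemma gBasis_inr_inl (i : Fin (2 * n - 6)) :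
    gBasis n (.inr (.inl i)) = (0, Pi.single i 1, 0) := by
  ext <;> simp [gBasis]

lemma gBasis_inr_inr (u : Unit) : gBasis n (.inr (.inr u)) = (0, 0, 1) := by
  ext <;> simp [gBasis]

lemma bEps_succ (i : Fin (2 * n - 6)) : bEps n (i.val + 1) = gBasis n (.inr (.inl i)) := by
  rw [gBasis_inr_inl]
  ext <;> simp [bEps, epsV, Pi.single_apply, Fin.ext_iff]

lemma gBr_gradingElt_gBasis (i : GIndex n) :
    gBr n (gradingElt n k) (gBasis n i) = (gWeight n k i : ℝ) • gBasis n i := by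
  rw [gradingElt, gBr_gl2]
  rcases i with i | i | u
  · rw [gBasis_inl]
    refine Prod.ext ?_ ((map_zero (phiL n _)).trans (smul_zero _).symm)
    ext j
    fin_cases i <;> fin_cases j <;> simp [gl2Br, gWeight] <;> norm_num
  · rw [gBasis_inr_inl]
    refine Prod.ext ((map_zero (gl2BrL _)).trans (smul_zero _).symm) (Prod.ext ?_ ?_)
    · ext j
      rcases eq_or_ne j i with rfl | hji
      · simp only [phi_fst, hOp_apply, hCoeff, gWeight, Matrix.cons_val, Pi.add_apply,
          Pi.smul_apply, Prod.smul_mk, smul_eq_mul, Pi.single_eq_same, Pi.zero_apply, zero_smul]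
        push_cast
        ring
      · simp [phi_fst, hOp_apply, hji]
    · simp [phi_snd]
  · rw [gBasis_inr_inr]
    refine Prod.ext ((map_zero (gl2BrL _)).trans (smul_zero _).symm) (Prod.ext ?_ ?_)
    · simp [phi_fst]
    · simp only [phi_snd, gWeight, Matrix.cons_val, Prod.smul_mk, smul_eq_mul]
      push_cast
      ring

lemma gComp_eq_span (w : ℤ) :
    gComp n k w = Submodule.span ℝ (gBasis n '' {i | (gWeight n k i : ℝ) = w}) := by
  have hgl : bY n = gBasis n (.inl 0) ∧ bH n = gBasis n (.inl 1) ∧ bE n = gBasis n (.inl 2) ∧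
      bX n = gBasis n (.inl 3) := by
    simp only [gBasis_inl, bY, bH, bE, bX, Prod.mk.injEq, and_true, funext_iff, Fin.forall_fin_succ]
    simp
  have hEta : bEta n = gBasis n (.inr (.inr ())) := (gBasis_inr_inr ()).symm
  obtain ⟨hY, hH, hE, hX⟩ := hgl
  rw [gComp]
  congr 1
  ext v
  constructor
  · rintro (⟨rfl, rfl⟩ | ⟨rfl | rfl, rfl⟩ | ⟨rfl, rfl⟩ | ⟨p, hp, hpn, rfl, rfl⟩ | ⟨rfl, rfl⟩)
    · exact ⟨_, rfl, hY.symm⟩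
    · exact ⟨_, rfl, hH.symm⟩
    · exact ⟨_, rfl, hE.symm⟩
    · exact ⟨_, rfl, hX.symm⟩
    · obtain ⟨i, rfl⟩ := Nat.exists_eq_add_of_le' hp
      exact ⟨.inr (.inl ⟨i, hpn⟩), by simp [gWeight], (bEps_succ ⟨i, hpn⟩).symm⟩
    · exact ⟨_, rfl, hEta.symm⟩
  · rintro ⟨i, hi, rfl⟩
    obtain rfl : gWeight n k i = w := Int.cast_injective hi
    rcases i with i | i | u
    · fin_cases i
      · exact .inl ⟨hY.symm, rfl⟩
      · exact .inr (.inl ⟨.inl hH.symm, rfl⟩)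
      · exact .inr (.inl ⟨.inr hE.symm, rfl⟩)
      · exact .inr (.inr (.inl ⟨hX.symm, rfl⟩))
    · exact .inr (.inr (.inr (.inl ⟨i + 1, by omega, by omega, (bEps_succ i).symm,
        by simp [gWeight]⟩)))
    · exact .inr (.inr (.inr (.inr ⟨hEta.symm, rfl⟩)))

lemma mem_gComp {w : ℤ} {x : Gg n} :
    x ∈ gComp n k w ↔ gBr n (gradingElt n k) x = (w : ℝ) • x := by
  simp only [gBr_eq_gBrL]
  rw [gComp_eq_span, ← Module.End.mem_eigenspace_iff]
  rw [eigenspace_eq_span_image (gBasis n) fun i ↦ by rw [← gBr_eq_gBrL, gBr_gradingElt_gBasis]]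

lemma gBasis_mem_gComp (i : GIndex n) : gBasis n i ∈ gComp n k (gWeight n k i) := by
  rw [mem_gComp, gBr_gradingElt_gBasis]

lemma gBr_mem_gComp {p q r : ℤ} {x y : Gg n} (hx : x ∈ gComp n k p) (hy : y ∈ gComp n k q)
    (hr : p + q = r) : gBr n x y ∈ gComp n k r := by
  rw [mem_gComp] at hx hy ⊢
  rw [gBr_leibniz, hx, hy, ← hr]
  simp only [gBr_eq_gBrL, map_smul, LinearMap.smul_apply, Int.cast_add, add_smul]

end Grading

section NegativePart

variable {n k : ℕ}

/-- The projection `π_m` as a linear map. -/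
def ptoML (n k : ℕ) : Gg n →ₗ[ℝ] MT n k where
  toFun := ptoM n k
  map_add' x y := by ext i <;> simp [ptoM, Pm, ite_add_ite]
  map_smul' r x := by ext i <;> simp [ptoM, Pm]

lemma ptoM_coe (x : MT n k) : ptoM n k x = x := by
  obtain ⟨x, h0, h1, h2, hlow⟩ := x
  refine Subtype.ext (Prod.ext ?_ (Prod.ext ?_ rfl))
  · ext j
    fin_cases j <;> simp [ptoM, Pm, h0, h1, h2]
  · ext i
    rcases le_or_gt ((n : ℤ) - 3 - k) (i.val + 1) with hi | hi
    · exact if_pos hi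
    · exact (if_neg hi.not_ge).trans (hlow i hi).symm

lemma coe_ptoM_gBasis (i : GIndex n) :
    (ptoM n k (gBasis n i) : Gg n) = if gWeight n k i < 0 then gBasis n i else 0 := by
  rcases i with i | i | u
  · rw [gBasis_inl]
    fin_cases i <;> ext j <;> (try fin_cases j) <;> simp [ptoM, Pm, gWeight]
  · have hneg : gWeight n k (.inr (.inl i)) < 0 ↔ (n : ℤ) - 3 - k ≤ i.val + 1 := by
      simp only [gWeight]; omega
    rw [gBasis_inr_inl]
    simp only [hneg]
    ext j
    · fin_cases j <;> split_ifs <;> simp [ptoM, Pm]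
    · rcases eq_or_ne j i with rfl | hji
      · split_ifs with h <;> simpa [ptoM, Pm] using h
      · split_ifs <;> simp [ptoM, Pm, hji]
    · split_ifs <;> simp [ptoM, Pm]
  · have hneg : gWeight n k (.inr (.inr u)) < 0 := by simp only [gWeight]; omega
    rw [gBasis_inr_inr, if_pos hneg]
    ext j <;> (try fin_cases j) <;> simp [ptoM, Pm]

lemma coe_ptoM_of_mem_gComp {w : ℤ} {x : Gg n} (hx : x ∈ gComp n k w) :
    (ptoM n k x : Gg n) = if w < 0 then x else 0 := by
  have hspan : Set.EqOn ((mSub n k).subtype ∘ₗ ptoML n k)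
      (if w < 0 then LinearMap.id else 0 : Gg n →ₗ[ℝ] Gg n)
      (Submodule.span ℝ (gBasis n '' {i | (gWeight n k i : ℝ) = w})) := by
    refine LinearMap.eqOn_span ?_
    rintro _ ⟨i, hi, rfl⟩
    obtain rfl : gWeight n k i = w := Int.cast_injective hi
    refine (coe_ptoM_gBasis i).trans ?_
    split_ifs <;> rfl
  refine (hspan (gComp_eq_span w ▸ hx)).trans ?_
  split_ifs <;> rfl

lemma ptoM_eq_zero_or_mem_gComp {w : ℤ} {x : Gg n} (hx : x ∈ gComp n k w) :
    ptoM n k x = 0 ∨ w < 0 ∧ (ptoM n k x : Gg n) ∈ gComp n k w := by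
  have hcoe := coe_ptoM_of_mem_gComp hx
  split_ifs at hcoe with hw
  · exact .inr ⟨hw, by rwa [hcoe]⟩
  · exact .inl (Subtype.ext hcoe)

lemma gBr_mem_mSub {S x : Gg n} (hS : S.1 0 = 0)
    (hSlow : ∀ i : Fin (2 * n - 6), (i.val : ℤ) + 1 < n - 3 - k → S.2.1 i = 0)
    (hx : x ∈ mSub n k) : gBr n S x ∈ mSub n k := by
  obtain ⟨h0, h1, h2, hlow⟩ := hx
  have hshift (v : Fin (2 * n - 6) → ℝ) (hv : ∀ i : Fin (2 * n - 6),
      (i.val : ℤ) + 1 < n - 3 - k → v i = 0) (i : Fin (2 * n - 6))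
      (hi : (i.val : ℤ) + 1 < n - 3 - k) : shiftUp v i = 0 := by
    rw [shiftUp_apply]
    split_ifs
    · exact hv _ (by simp only; omega)
    · rfl
  refine ⟨by simp [gBr, gl2Br, hS, h0], by simp [gBr, gl2Br, hS, h0], rfl, fun i hi ↦ ?_⟩
  simp [gBr, phi_fst, hOp_apply, heisBr, hS, h0, h1, h2, hlow i hi,
    hshift _ hlow i hi, hshift _ hSlow i hi]

lemma gBr_mem_mSub_of_mem {x y : Gg n} (hx : x ∈ mSub n k) (hy : y ∈ mSub n k) :
    gBr n x y ∈ mSub n k :=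
  gBr_mem_mSub hx.1 hx.2.2.2 hy

/-- The operator `x ↦ π_m [A, x]` of `m`. -/
def adM (k : ℕ) (A : Gg n) : Module.End ℝ (MT n k) :=
  ptoML n k ∘ₗ gBrL n A ∘ₗ (mSub n k).subtype

lemma adM_apply (A : Gg n) (x : MT n k) : adM k A x = ptoM n k (gBr n A x) := by
  rw [gBr_eq_gBrL]
  rfl

end NegativePart

section Cochain

variable {n k : ℕ} {φ : MT n k → Gg n} {ψ : MT n k → MT n k → Gg n} {A : Gg n} {s w : ℤ}

/-- The linear map underlying a 1-cochain. -/
def IsLin1.toLin (hφ : IsLin1 n k φ) : MT n k →ₗ[ℝ] Gg n where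
  toFun := φ
  map_add' := hφ.1
  map_smul' := hφ.2

/-- The bilinear map underlying a 2-cochain. -/
def IsAlt2.toLin (hψ : IsAlt2 n k ψ) : MT n k →ₗ[ℝ] MT n k →ₗ[ℝ] Gg n :=
  LinearMap.mk₂ ℝ ψ (fun x x' y ↦ (hψ.1 y).1 x x') (fun r x y ↦ (hψ.1 y).2 r x)
    (fun x ↦ (hψ.2.1 x).1) (fun r x y ↦ (hψ.2.1 x).2 r y)

lemma isLin1_coe (f : MT n k →ₗ[ℝ] Gg n) : IsLin1 n k f := ⟨map_add f, map_smul f⟩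

lemma isAlt2_coe (f : MT n k →ₗ[ℝ] MT n k →ₗ[ℝ] Gg n) (hf : ∀ x, f x x = 0) :
    IsAlt2 n k fun x y ↦ f x y :=
  ⟨fun y ↦ isLin1_coe (f.flip y), fun x ↦ isLin1_coe (f x), hf⟩

lemma IsAlt2.swap (hψ : IsAlt2 n k ψ) (x y : MT n k) : ψ x y = -ψ y x :=
  (LinearMap.IsAlt.neg (B := hψ.toLin) hψ.2.2 y x).symm

lemma isLin1_act1 (hφ : IsLin1 n k φ) (A : Gg n) : IsLin1 n k (act1 n k A φ) := by
  convert isLin1_coe (gBrL n A ∘ₗ hφ.toLin - hφ.toLin ∘ₗ adM k A) using 1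
  ext1 x
  simp only [act1, gBr_eq_gBrL]
  rfl

lemma isAlt2_act2 (hψ : IsAlt2 n k ψ) (A : Gg n) : IsAlt2 n k (act2 n k A ψ) := by
  convert isAlt2_coe (hψ.toLin.compr₂ (gBrL n A) - hψ.toLin ∘ₗ adM k A - hψ.toLin.compl₂ (adM k A))
    (fun x ↦ ?_) using 1
  · ext1 x; ext1 y
    simp only [act2, gBr_eq_gBrL]
    rfl
  · have hdiag : hψ.toLin x x = 0 := hψ.2.2 x
    have hswap : hψ.toLin (adM k A x) x = -hψ.toLin x (adM k A x) := hψ.swap _ _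
    simp [hdiag, hswap]

lemma isAlt2_cobound (hφ : IsLin1 n k φ) : IsAlt2 n k (cobound n k φ) := by
  let β := (gBrL n).compl₁₂ (mSub n k).subtype hφ.toLin
  convert isAlt2_coe (β - β.flip + ((gBrL n).compl₁₂ (mSub n k).subtype (mSub n k).subtype).compr₂
    (hφ.toLin ∘ₗ ptoML n k)) (fun x ↦ ?_) using 1
  · ext1 x; ext1 y
    simp only [cobound, mBrM, gBr_eq_gBrL]
    rfl
  · simp [← gBr_eq_gBrL, gBr_self]

lemma act2_cobound (hA : ∀ x ∈ mSub n k, gBr n A x ∈ mSub n k) (hφ : IsLin1 n k φ) :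
    act2 n k A (cobound n k φ) = cobound n k (act1 n k A φ) := by
  have coe_ptoM {z : Gg n} (hz : z ∈ mSub n k) : (ptoM n k z : Gg n) = z :=
    congrArg Subtype.val (ptoM_coe ⟨z, hz⟩)
  ext1 x; ext1 y
  have hmBr : (mBrM n k x y : Gg n) = gBr n x y := coe_ptoM (gBr_mem_mSub_of_mem x.2 y.2)
  have hbr : φ (ptoM n k (gBr n A (gBr n x y))) =
      φ (mBrM n k (ptoM n k (gBr n A x)) y) + φ (mBrM n k x (ptoM n k (gBr n A y))) := by
    rw [← hφ.1, mBrM, mBrM, coe_ptoM (hA x x.2), coe_ptoM (hA y y.2), gBr_leibniz]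
    exact congrArg φ (map_add (ptoML n k) _ _)
  simp only [act2, act1, cobound, hmBr, hbr, coe_ptoM (hA x x.2), coe_ptoM (hA y y.2)]
  have hx := gBr_leibniz A x (φ y)
  have hy := gBr_leibniz A y (φ x)
  simp only [gBr_eq_gBrL, map_add, map_sub] at hx hy ⊢
  rw [hx, hy]
  abel

variable (n k w) in
/-- The homogeneous 1-cochains of weight `w`. -/
def homog1Sub : Submodule ℝ (MT n k → Gg n) where
  carrier := {φ | IsLin1 n k φ ∧ Homog1 n k w φ}
  add_mem' := fun ⟨hl, hh⟩ ⟨hl', hh'⟩ ↦ ⟨isLin1_coe (hl.toLin + hl'.toLin),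
    fun p hp x hx ↦ add_mem (hh p hp x hx) (hh' p hp x hx)⟩
  zero_mem' := ⟨isLin1_coe 0, fun _ _ _ _ ↦ zero_mem _⟩
  smul_mem' := fun r _ ⟨hl, hh⟩ ↦ ⟨isLin1_coe (r • hl.toLin),
    fun p hp x hx ↦ Submodule.smul_mem _ r (hh p hp x hx)⟩

variable (n k) in
/-- The space `C²(m,g)` of all 2-cochains. -/
def alt2Sub : Submodule ℝ (MT n k → MT n k → Gg n) where
  carrier := {ψ | IsAlt2 n k ψ}
  add_mem' := fun hψ hχ ↦ isAlt2_coe (hψ.toLin + hχ.toLin) fun x ↦ by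
    simp [IsAlt2.toLin, hψ.2.2 x, hχ.2.2 x]
  zero_mem' := isAlt2_coe 0 fun _ ↦ rfl
  smul_mem' := fun r _ hψ ↦ isAlt2_coe (r • hψ.toLin) fun x ↦ by
    simp [IsAlt2.toLin, hψ.2.2 x]

variable (n k w) in
/-- The homogeneous 2-cochains of weight `w`. -/
def homog2Sub : Submodule ℝ (MT n k → MT n k → Gg n) where
  carrier := {ψ | IsAlt2 n k ψ ∧ Homog2 n k w ψ}
  add_mem' := fun ⟨ha, hh⟩ ⟨ha', hh'⟩ ↦ ⟨(alt2Sub n k).add_mem ha ha',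
    fun p q hp hq x y hx hy ↦ add_mem (hh p q hp hq x y hx hy) (hh' p q hp hq x y hx hy)⟩
  zero_mem' := ⟨(alt2Sub n k).zero_mem, fun _ _ _ _ _ _ _ _ ↦ zero_mem _⟩
  smul_mem' := fun r _ ⟨ha, hh⟩ ↦ ⟨(alt2Sub n k).smul_mem r ha,
    fun p q hp hq x y hx hy ↦ Submodule.smul_mem _ r (hh p q hp hq x y hx hy)⟩

lemma apply_ptoM_mem_gComp (hφ : φ ∈ homog1Sub n k w) {p r : ℤ} {x : Gg n}
    (hx : x ∈ gComp n k p) (hr : p + w = r) : φ (ptoM n k x) ∈ gComp n k r := by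
  rcases ptoM_eq_zero_or_mem_gComp hx with h | ⟨hp, h⟩
  · rw [h, show φ 0 = 0 from map_zero hφ.1.toLin]
    exact zero_mem _
  · exact hr ▸ hφ.2 p hp _ h

lemma apply_ptoM_ptoM_mem_gComp (hψ : ψ ∈ homog2Sub n k w) {p q r : ℤ} {x y : Gg n}
    (hx : x ∈ gComp n k p) (hy : y ∈ gComp n k q) (hr : p + q + w = r) :
    ψ (ptoM n k x) (ptoM n k y) ∈ gComp n k r := by
  have hzero (y : MT n k) : ψ 0 y = 0 := LinearMap.map_zero₂ hψ.1.toLin y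
  rcases ptoM_eq_zero_or_mem_gComp hx with h | ⟨hp, h⟩
  · rw [h, hzero]
    exact zero_mem _
  rcases ptoM_eq_zero_or_mem_gComp hy with h' | ⟨hq, h'⟩
  · rw [h', hψ.1.swap, hzero, neg_zero]
    exact zero_mem _
  · exact hr ▸ hψ.2 p q hp hq _ _ h h'

lemma act1_mem_homog1Sub (hA : A ∈ gComp n k s) (hφ : φ ∈ homog1Sub n k w) :
    act1 n k A φ ∈ homog1Sub n k (s + w) :=
  ⟨isLin1_act1 hφ.1 A, fun p hp x hx ↦ sub_mem (gBr_mem_gComp hA (hφ.2 p hp x hx) (by ring))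
    (apply_ptoM_mem_gComp hφ (gBr_mem_gComp hA hx rfl) (by ring))⟩

lemma act2_mem_homog2Sub (hA : A ∈ gComp n k s) (hψ : ψ ∈ homog2Sub n k w) :
    act2 n k A ψ ∈ homog2Sub n k (s + w) := by
  refine ⟨isAlt2_act2 hψ.1 A, fun p q hp hq x y hx hy ↦ ?_⟩
  have hleft : ψ (ptoM n k (gBr n A x)) y ∈ gComp n k (p + q + (s + w)) := by
    rw [← ptoM_coe y]
    exact apply_ptoM_ptoM_mem_gComp hψ (gBr_mem_gComp hA hx rfl) hy (by ring)
  have hright : ψ x (ptoM n k (gBr n A y)) ∈ gComp n k (p + q + (s + w)) := by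
    rw [← ptoM_coe x]
    exact apply_ptoM_ptoM_mem_gComp hψ hx (gBr_mem_gComp hA hy rfl) (by ring)
  exact sub_mem (sub_mem (gBr_mem_gComp hA (hψ.2 p q hp hq x y hx hy) (by ring)) hleft) hright

lemma cobound_mem_homog2Sub (hφ : φ ∈ homog1Sub n k w) : cobound n k φ ∈ homog2Sub n k w :=
  ⟨isAlt2_cobound hφ.1, fun p q hp hq x y hx hy ↦ add_mem
    (sub_mem (gBr_mem_gComp hx (hφ.2 q hq y hy) (by ring))
      (gBr_mem_gComp hy (hφ.2 p hp x hx) (by ring)))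
    (apply_ptoM_mem_gComp hφ (gBr_mem_gComp hx hy rfl) rfl)⟩

/-- The coboundary as a linear map. -/
def coboundL (n k : ℕ) : (MT n k → Gg n) →ₗ[ℝ] MT n k → MT n k → Gg n where
  toFun := cobound n k
  map_add' φ φ' := by
    ext1 x; ext1 y
    simp only [cobound, gBr_eq_gBrL, Pi.add_apply, map_add]
    abel
  map_smul' r φ := by
    ext1 x; ext1 y
    simp only [cobound, gBr_eq_gBrL, Pi.smul_apply, map_smul, RingHom.id_apply]
    module

/-- The action of an element of `g` on 2-cochains as a linear map. -/
def act2L (n k : ℕ) (A : Gg n) : (MT n k → MT n k → Gg n) →ₗ[ℝ] MT n k → MT n k → Gg n where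
  toFun := act2 n k A
  map_add' ψ ψ' := by
    ext1 x; ext1 y
    simp only [act2, gBr_eq_gBrL, Pi.add_apply, map_add]
    abel
  map_smul' r ψ := by
    ext1 x; ext1 y
    simp only [act2, gBr_eq_gBrL, Pi.smul_apply, map_smul, RingHom.id_apply]
    module

lemma act2_add_left (hψ : IsAlt2 n k ψ) (A B : Gg n) :
    act2 n k (A + B) ψ = act2 n k A ψ + act2 n k B ψ := by
  ext1 x; ext1 y
  have hptoM (u v : Gg n) : ptoM n k (u + v) = ptoM n k u + ptoM n k v := map_add (ptoML n k) u v
  simp only [act2, gBr_eq_gBrL, Pi.add_apply, map_add, LinearMap.add_apply, hptoM,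
    (hψ.1 _).1, (hψ.2.1 _).1]
  abel

end Cochain

section InnerProduct

variable {n k : ℕ}

/-- The squared norm of `ε_{i+1}` in the inner product `innerG`: the recursion it satisfies is the
one making the action of `X` adjoint to that of `Y`. -/
def epsNormSq (n i : ℕ) : ℝ := ∏ j ∈ Finset.range i, yCoeff n j

/-- The squared norms of the basis vectors of `g` in the inner product `innerG`. -/
def gNormSq (n : ℕ) : GIndex n → ℝ
  | .inl i => ![1, 2, 1, 1] i
  | .inr (.inl i) => epsNormSq n i
  | .inr (.inr _) => 1

/-- The inner product on `g` in which the basis `gBasis` is orthogonal, with squared norms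
`gNormSq`. -/
def innerG (n : ℕ) : LinearMap.BilinForm ℝ (Gg n) :=
  (weightedForm (gNormSq n) id (LinearMap.mul ℝ ℝ)).compl₁₂ (gBasis n).equivFun.toLinearMap
    (gBasis n).equivFun.toLinearMap

/-- The transpose on `gl₂(ℝ)`, exchanging `X` and `Y` and fixing `H` and `E`. -/
def gl2Transpose (a : G2) : G2 := ![a 3, a 1, a 2, a 0]

lemma yCoeff_pos {i : ℕ} (hi : i + 1 < 2 * n - 6) : 0 < yCoeff n i := by
  have h : i + 7 < 2 * n := by omega
  have h' : (i : ℝ) + 7 < 2 * n := mod_cast h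
  exact mul_pos (by positivity) (by linarith)

lemma epsNormSq_pos {i : ℕ} (hi : i < 2 * n - 6) : 0 < epsNormSq n i :=
  Finset.prod_pos fun j hj ↦ yCoeff_pos (by rw [Finset.mem_range] at hj; omega)

lemma gNormSq_pos (i : GIndex n) : 0 < gNormSq n i := by
  rcases i with i | i | _
  · fin_cases i <;> simp [gNormSq]
  · exact epsNormSq_pos i.2
  · exact one_pos

lemma inv_gNormSq_pos (i : GIndex n) : 0 < (gNormSq n)⁻¹ i := inv_pos.2 (gNormSq_pos i)

lemma innerG_eq_sum (u v : Gg n) :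
    innerG n u v = ∑ i, gNormSq n i * ((gBasis n).repr u i * (gBasis n).repr v i) := by
  simp [innerG, weightedForm_apply]

lemma innerG_apply (u v : Gg n) :
    innerG n u v = u.1 0 * v.1 0 + 2 * (u.1 1 * v.1 1) + u.1 2 * v.1 2 + u.1 3 * v.1 3 +
      (∑ i : Fin (2 * n - 6), epsNormSq n i * (u.2.1 i * v.2.1 i) + u.2.2 * v.2.2) := by
  simp [innerG_eq_sum, Fintype.sum_sum_type, gBasis, gNormSq, Fin.sum_univ_four]

lemma isSymm_innerG : (innerG n).IsSymm := ⟨fun u v ↦ by simp only [innerG_apply, mul_comm]⟩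

lemma innerG_self_nonneg (u : Gg n) : 0 ≤ innerG n u u :=
  weightedForm_self_nonneg gNormSq_pos mul_self_nonneg _

lemma innerG_self_eq_zero {u : Gg n} (hu : innerG n u u = 0) : u = 0 := by
  refine (gBasis n).equivFun.map_eq_zero_iff.1 (funext fun i ↦ mul_self_eq_zero.1 ?_)
  exact apply_self_eq_zero_of_weightedForm_self gNormSq_pos mul_self_nonneg hu i

lemma sum_epsNormSq_mul_shiftUp (u v : Fin (2 * n - 6) → ℝ) :
    ∑ i : Fin (2 * n - 6), epsNormSq n i * (shiftUp u i * v i) =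
      ∑ i : Fin (2 * n - 6), epsNormSq n i * (u i * yOp n v i) := by
  have hshift (i : Fin (2 * n - 6)) :
      shiftDown (fun j ↦ epsNormSq n j * v j) i = epsNormSq n i * yCoeff n i * shiftDown v i :=
    shiftDown_mul (a := fun j ↦ epsNormSq n j) (b := fun j ↦ epsNormSq n j * yCoeff n j)
      (fun _ _ ↦ Finset.prod_range_succ _ _) v i
  calc ∑ i : Fin (2 * n - 6), epsNormSq n i * (shiftUp u i * v i)
      = ∑ i, shiftUp u i * (epsNormSq n i * v i) := Finset.sum_congr rfl fun i _ ↦ by ring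
    _ = ∑ i : Fin (2 * n - 6), epsNormSq n i * (u i * yOp n v i) := by
        simp_rw [sum_shiftUp_mul, hshift, yOp_apply]
        exact Finset.sum_congr rfl fun i _ ↦ by ring

lemma innerG_gBr_gl2 (a : G2) (u v : Gg n) :
    innerG n (gBr n (a, 0) u) v = innerG n u (gBr n (gl2Transpose a, 0) v) := by
  have hX := sum_epsNormSq_mul_shiftUp u.2.1 v.2.1
  have hY := sum_epsNormSq_mul_shiftUp v.2.1 u.2.1
  rw [← sub_eq_zero, ← Finset.sum_sub_distrib] at hX hY
  have hXY := congrArg₂ (fun s t ↦ a 3 * s - a 0 * t) hX hY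
  simp only [mul_zero, sub_zero, Finset.mul_sum, ← Finset.sum_sub_distrib] at hXY
  have hsum : ∑ i : Fin (2 * n - 6), epsNormSq n i * ((phi n a u.2).1 i * v.2.1 i) =
      ∑ i : Fin (2 * n - 6), epsNormSq n i * (u.2.1 i * (phi n (gl2Transpose a) v.2).1 i) := by
    rw [← sub_eq_zero, ← Finset.sum_sub_distrib, ← hXY]
    refine Finset.sum_congr rfl fun i _ ↦ ?_
    simp only [phi_fst, hOp_apply, gl2Transpose, Pi.add_apply, Pi.smul_apply, smul_eq_mul,
      Matrix.cons_val]
    ring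
  simp only [innerG_apply, gBr_gl2, hsum, phi_snd, gl2Br, gl2Transpose, Matrix.cons_val]
  ring

lemma gl2_mem_gComp_iff {a : G2} {s : ℤ} :
    ((a, 0) : Gg n) ∈ gComp n k s ↔
      a 0 = s * a 0 ∧ 0 = s * a 1 ∧ 0 = s * a 2 ∧ -a 3 = s * a 3 := by
  have hZ : gBr n (gradingElt n k) (a, 0) = (![a 0, 0, 0, -a 3], 0) := by
    rw [gradingElt, gBr_gl2]
    refine Prod.ext ?_ (map_zero (phiL n _))
    ext i
    fin_cases i <;> simp [gl2Br] <;> ring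
  rw [mem_gComp, hZ]
  simp [Prod.ext_iff, funext_iff, Fin.forall_fin_succ]

lemma gl2Transpose_mem_gComp {a : G2} {s : ℤ} (ha : ((a, 0) : Gg n) ∈ gComp n k s) :
    ((gl2Transpose a, 0) : Gg n) ∈ gComp n k (-s) := by
  obtain ⟨h0, h1, h2, h3⟩ := gl2_mem_gComp_iff.1 ha
  rw [gl2_mem_gComp_iff]
  simp only [gl2Transpose, Matrix.cons_val, Int.cast_neg]
  exact ⟨by linarith, by linarith, by linarith, by linarith⟩

lemma innerG_eq_zero_of_mem_gComp {p q : ℤ} (hpq : p ≠ q) {u v : Gg n} (hu : u ∈ gComp n k p)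
    (hv : v ∈ gComp n k q) : innerG n u v = 0 := by
  have htranspose : gl2Transpose (gradingElt n k).1 = (gradingElt n k).1 := by
    simp [gl2Transpose, gradingElt]
  rw [mem_gComp] at hu hv
  have h := innerG_gBr_gl2 (gradingElt n k).1 u v
  rw [htranspose] at h
  change innerG n (gBr n (gradingElt n k) u) v = innerG n u (gBr n (gradingElt n k) v) at h
  rw [hu, hv, map_smul, map_smul, LinearMap.smul_apply, smul_eq_mul, smul_eq_mul] at h
  have hne : (p : ℝ) - q ≠ 0 := sub_ne_zero.2 (Int.cast_injective.ne hpq)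
  exact (mul_eq_zero.1 ((sub_mul _ _ _).trans (sub_eq_zero.2 h))).resolve_left hne

end InnerProduct

section Pairing

variable {n k : ℕ}

/-- The inner product on `m`. -/
def innerM (n k : ℕ) : LinearMap.BilinForm ℝ (MT n k) := (innerG n).restrict (mSub n k)

/-- The projections to `m` of the basis vectors of `g`. Those which are nonzero form an orthogonal
basis of `m`. -/
def mFrame (n k : ℕ) (i : GIndex n) : MT n k := ptoM n k (gBasis n i)

/-- The inner product on 2-cochains induced by `innerG`. -/
def pairing (n k : ℕ) : LinearMap.BilinForm ℝ (MT n k → MT n k → Gg n) :=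
  weightedForm (gNormSq n)⁻¹ (mFrame n k) (weightedForm (gNormSq n)⁻¹ (mFrame n k) (innerG n))

lemma isSymm_innerM : (innerM n k).IsSymm := ⟨fun x y ↦ isSymm_innerG.eq x.1 y.1⟩

lemma innerG_ptoM (u : Gg n) (x : MT n k) : innerG n (ptoM n k u) x = innerG n u x := by
  obtain ⟨x, h0, h1, h2, hlow⟩ := x
  have hsum (i : Fin (2 * n - 6)) : (Pm n k u).2.1 i * x.2.1 i = u.2.1 i * x.2.1 i := by
    rcases le_or_gt ((n : ℤ) - 3 - k) (i.val + 1) with hi | hi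
    · exact congrArg (· * x.2.1 i) (if_pos hi)
    · rw [hlow i hi, mul_zero, mul_zero]
  simp only [innerG_apply, ptoM, hsum]
  simp [Pm, h0, h1, h2]

lemma isTightFrame_mFrame : IsTightFrame (innerM n k) (gNormSq n)⁻¹ (mFrame n k) := fun x ↦ by
  have hcoeff (i : GIndex n) :
      (gNormSq n)⁻¹ i * innerM n k (mFrame n k i) x = (gBasis n).repr x i := by
    have h : innerM n k (mFrame n k i) x = gNormSq n i * (gBasis n).repr x i :=
      (innerG_ptoM _ x).trans (by simp [innerG_eq_sum, Finsupp.single_apply])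
    rw [h, Pi.inv_apply, inv_mul_cancel_left₀ (gNormSq_pos i).ne']
  calc ∑ i, ((gNormSq n)⁻¹ i * innerM n k (mFrame n k i) x) • mFrame n k i
      = ptoML n k (∑ i, (gBasis n).repr x i • gBasis n i) := by
        simp_rw [hcoeff, map_sum, map_smul]
        rfl
    _ = x := by
        rw [(gBasis n).sum_repr]
        exact ptoM_coe x

lemma isSymm_pairing : (pairing n k).IsSymm :=
  isSymm_weightedForm (isSymm_weightedForm isSymm_innerG)

lemma eq_zero_of_pairing_self {ψ : MT n k → MT n k → Gg n} (hψ : IsAlt2 n k ψ)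
    (h : pairing n k ψ ψ = 0) : ψ = 0 := by
  have hframe (i j : GIndex n) : hψ.toLin (mFrame n k i) (mFrame n k j) = 0 := by
    have hi := apply_self_eq_zero_of_weightedForm_self inv_gNormSq_pos
      (weightedForm_self_nonneg inv_gNormSq_pos innerG_self_nonneg) h i
    exact innerG_self_eq_zero
      (apply_self_eq_zero_of_weightedForm_self inv_gNormSq_pos innerG_self_nonneg hi j)
  have hspan := isTightFrame_mFrame (n := n) (k := k) |>.span_eq_top
  have hzero : hψ.toLin = 0 := LinearMap.ext_on_range hspan fun i ↦
    LinearMap.ext_on_range hspan fun j ↦ hframe i j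
  funext x y
  exact LinearMap.congr_fun₂ hzero x y

lemma pairing_eq_zero_of_ne {v w : ℤ} (hvw : v ≠ w) {ψ χ : MT n k → MT n k → Gg n}
    (hψ : ψ ∈ homog2Sub n k v) (hχ : χ ∈ homog2Sub n k w) : pairing n k ψ χ = 0 := by
  simp only [pairing, weightedForm_apply]
  refine Finset.sum_eq_zero fun i _ ↦ mul_eq_zero_of_right _ (Finset.sum_eq_zero fun j _ ↦
    mul_eq_zero_of_right _ (innerG_eq_zero_of_mem_gComp ?_
      (apply_ptoM_ptoM_mem_gComp hψ (gBasis_mem_gComp i) (gBasis_mem_gComp j) rfl)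
      (apply_ptoM_ptoM_mem_gComp hχ (gBasis_mem_gComp i) (gBasis_mem_gComp j) rfl)))
  exact fun h ↦ hvw (add_left_cancel h)

lemma isAdjointPair_adM (a : G2) :
    LinearMap.IsAdjointPair (innerM n k) (innerM n k) (adM k (a, 0)) (adM k (gl2Transpose a, 0)) :=
  fun x y ↦ by
    change innerG n (adM k (a, 0) x) y = innerG n x (adM k (gl2Transpose a, 0) y)
    rw [adM_apply, adM_apply, innerG_ptoM, innerG_gBr_gl2, isSymm_innerG.eq, ← innerG_ptoM,
      isSymm_innerG.eq]

lemma pairing_act2 (a : G2) {ψ χ : MT n k → MT n k → Gg n} (hψ : IsAlt2 n k ψ)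
    (hχ : IsAlt2 n k χ) :
    pairing n k (act2 n k (a, 0) ψ) χ = pairing n k ψ (act2 n k (gl2Transpose a, 0) χ) := by
  obtain ⟨f, rfl⟩ : ∃ f : MT n k →ₗ[ℝ] MT n k →ₗ[ℝ] Gg n, ψ = fun x y ↦ f x y := ⟨hψ.toLin, rfl⟩
  obtain ⟨g, rfl⟩ : ∃ g : MT n k →ₗ[ℝ] MT n k →ₗ[ℝ] Gg n, χ = fun x y ↦ g x y := ⟨hχ.toLin, rfl⟩
  have hval : pairing n k (fun x y ↦ gBr n (a, 0) (f x y)) (fun x y ↦ g x y) =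
      pairing n k (fun x y ↦ f x y) (fun x y ↦ gBr n (gl2Transpose a, 0) (g x y)) := by
    simp only [pairing, weightedForm_apply, innerG_gBr_gl2]
  have hadj := isAdjointPair_adM (n := n) (k := k) a
  have hleft : pairing n k (fun x y ↦ f (adM k (a, 0) x) y) (fun x y ↦ g x y) =
      pairing n k (fun x y ↦ f x y) (fun x y ↦ g (adM k (gl2Transpose a, 0) x) y) := by
    rw [pairing, isTightFrame_mFrame.weightedForm_comp_left isSymm_innerM hadj f g]
  have hright : pairing n k (fun x y ↦ f x (adM k (a, 0) y)) (fun x y ↦ g x y) =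
      pairing n k (fun x y ↦ f x y) (fun x y ↦ g x (adM k (gl2Transpose a, 0) y)) := by
    rw [pairing, isTightFrame_mFrame.weightedForm_comp_right isSymm_innerM hadj f g]
  have hact (b : G2) (ω : MT n k → MT n k → Gg n) : act2 n k (b, 0) ω =
      (fun x y ↦ gBr n (b, 0) (ω x y)) - (fun x y ↦ ω (adM k (b, 0) x) y) -
        fun x y ↦ ω x (adM k (b, 0) y) := by
    simp only [adM_apply]
    rfl
  simp only [hact, map_sub, LinearMap.sub_apply, hval, hleft, hright]

end Pairing

section Normalization

variable {n k : ℕ} {s w : ℤ}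

variable (n k w) in
/-- The coboundaries of the homogeneous 1-cochains of weight `w`. -/
def coboundSub : Submodule ℝ (MT n k → MT n k → Gg n) := (homog1Sub n k w).map (coboundL n k)

variable (n k w) in
/-- The homogeneous 2-cochains of weight `w` orthogonal to the coboundaries of that weight. -/
def normalSub : Submodule ℝ (MT n k → MT n k → Gg n) :=
  homog2Sub n k w ⊓ (pairing n k).orthogonal (coboundSub n k w)

instance : FiniteDimensional ℝ (homog1Sub n k w) :=
  Submodule.finiteDimensional_of_le (S₂ := (LinearMap.ltoFun ℝ (MT n k) (Gg n) ℝ).range)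
    fun _ hφ ↦ ⟨hφ.1.toLin, rfl⟩

instance : FiniteDimensional ℝ (coboundSub n k w) :=
  inferInstanceAs (FiniteDimensional ℝ ((homog1Sub n k w).map (coboundL n k)))

lemma coboundSub_le_homog2Sub : coboundSub n k w ≤ homog2Sub n k w :=
  Submodule.map_le_iff_le_comap.2 fun _ hφ ↦ cobound_mem_homog2Sub hφ

lemma C1plus_eq_iSup : C1plus n k = ⨆ w : {w : ℤ // 0 < w}, homog1Sub n k w := by
  rw [Submodule.iSup_eq_span, C1plus]
  congr 1
  ext φ
  simp [homog1Sub]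

lemma C2plus_eq_iSup : C2plus n k = ⨆ w : {w : ℤ // 0 < w}, homog2Sub n k w := by
  rw [Submodule.iSup_eq_span, C2plus]
  congr 1
  ext φ
  simp [homog2Sub]

lemma imDel_eq_iSup : imDel n k = ⨆ w : {w : ℤ // 0 < w}, coboundSub n k w := by
  calc imDel n k = Submodule.span ℝ (coboundL n k '' C1plus n k) := rfl
    _ = (C1plus n k).map (coboundL n k) := by rw [Submodule.span_image, Submodule.span_eq]
    _ = ⨆ w : {w : ℤ // 0 < w}, coboundSub n k w := by
        simp only [C1plus_eq_iSup, Submodule.map_iSup, coboundSub]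

lemma act2_mem_normalSub {a : G2} (ha : ((a, 0) : Gg n) ∈ gComp n k s) (ha3 : a 3 = 0)
    {ψ : MT n k → MT n k → Gg n} (hψ : ψ ∈ normalSub n k w) :
    act2 n k (a, 0) ψ ∈ normalSub n k (s + w) := by
  obtain ⟨hψ, hort⟩ := hψ
  refine ⟨act2_mem_homog2Sub ha hψ, ?_⟩
  rintro _ ⟨φ, hφ, rfl⟩
  have hm (x : Gg n) (hx : x ∈ mSub n k) : gBr n (gl2Transpose a, 0) x ∈ mSub n k :=
    gBr_mem_mSub ha3 (fun _ _ ↦ rfl) hx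
  have hφ' : act1 n k (gl2Transpose a, 0) φ ∈ homog1Sub n k w := by
    simpa using act1_mem_homog1Sub (gl2Transpose_mem_gComp ha) hφ
  calc pairing n k (cobound n k φ) (act2 n k (a, 0) ψ)
      = pairing n k (act2 n k (a, 0) ψ) (cobound n k φ) := isSymm_pairing.eq _ _
    _ = pairing n k ψ (act2 n k (gl2Transpose a, 0) (cobound n k φ)) :=
        pairing_act2 a hψ.1 (isAlt2_cobound hφ.1)
    _ = pairing n k ψ (cobound n k (act1 n k (gl2Transpose a, 0) φ)) := by
        rw [act2_cobound hm hφ.1]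
    _ = pairing n k (cobound n k (act1 n k (gl2Transpose a, 0) φ)) ψ := isSymm_pairing.eq _ _
    _ = 0 := hort _ ⟨_, hφ', rfl⟩

/-- The normalization condition: the span of all `normalSub n k w` with `w` positive. -/
def normalization (n k : ℕ) : Submodule ℝ (MT n k → MT n k → Gg n) :=
  ⨆ w : {w : ℤ // 0 < w}, normalSub n k w

lemma normalization_le_C2plus : normalization n k ≤ C2plus n k :=
  C2plus_eq_iSup (n := n) ▸ iSup_mono fun _ ↦ inf_le_left

lemma normalization_eq_span :
    normalization n k = Submodule.span ℝ {ψ | ψ ∈ normalization n k ∧ ∃ w, Homog2 n k w ψ} := by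
  refine le_antisymm (iSup_le fun w ψ hψ ↦ Submodule.subset_span ?_)
    (Submodule.span_le.2 fun ψ hψ ↦ hψ.1)
  exact ⟨Submodule.mem_iSup_of_mem w hψ, w, hψ.1.2⟩

lemma C2plus_le_alt2Sub : C2plus n k ≤ alt2Sub n k := Submodule.span_le.2 fun _ hψ ↦ hψ.1

lemma act2_mem_normalization_of_mem_gComp {a : G2} (hs : 0 ≤ s) (ha3 : a 3 = 0)
    (ha : ((a, 0) : Gg n) ∈ gComp n k s) {ψ : MT n k → MT n k → Gg n}
    (hψ : ψ ∈ normalization n k) : act2 n k (a, 0) ψ ∈ normalization n k := by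
  suffices normalization n k ≤ (normalization n k).comap (act2L n k (a, 0)) from this hψ
  exact iSup_le fun w χ hχ ↦
    Submodule.mem_iSup_of_mem ⟨s + w, by have := w.2; omega⟩ (act2_mem_normalSub ha ha3 hχ)

lemma act2_mem_normalization {a : G2} (ha : a 3 = 0) {ψ : MT n k → MT n k → Gg n}
    (hψ : ψ ∈ normalization n k) : act2 n k (a, 0) ψ ∈ normalization n k := by
  have hdecomp : ((a, 0) : Gg n) = (![a 0, 0, 0, 0], 0) + (![0, a 1, a 2, 0], 0) := by
    ext i <;> (try fin_cases i) <;> simp [ha]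
  rw [hdecomp, act2_add_left (C2plus_le_alt2Sub (normalization_le_C2plus hψ))]
  refine add_mem (act2_mem_normalization_of_mem_gComp (s := 1) zero_le_one rfl ?_ hψ)
    (act2_mem_normalization_of_mem_gComp (s := 0) le_rfl rfl ?_ hψ) <;>
  simp [gl2_mem_gComp_iff]

lemma normalization_sup_imDel : normalization n k ⊔ imDel n k = C2plus n k := by
  rw [imDel_eq_iSup, C2plus_eq_iSup]
  exact iSup_inf_orthogonal_sup_iSup isSymm_pairing (fun _ ↦ coboundSub_le_homog2Sub)
    fun _ ψ hψ ↦ eq_zero_of_pairing_self (coboundSub_le_homog2Sub hψ).1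

lemma disjoint_normalization_imDel : Disjoint (normalization n k) (imDel n k) := by
  rw [imDel_eq_iSup]
  refine disjoint_iSup_inf_orthogonal_iSup (fun _ ↦ coboundSub_le_homog2Sub)
    (fun v w hvw ψ hψ χ hχ ↦ pairing_eq_zero_of_ne (Subtype.coe_injective.ne hvw) hψ hχ)
    fun ψ hψ ↦ eq_zero_of_pairing_self ?_
  have hle : ⨆ w : {w : ℤ // 0 < w}, coboundSub n k w ≤ alt2Sub n k :=
    iSup_le fun w ↦ coboundSub_le_homog2Sub.trans fun _ hχ ↦ hχ.1
  exact hle hψ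

lemma snd_eq_zero_of_mem_g0Sub (hk : n ≤ k + 4) {A : Gg n} (hA : A ∈ g0Sub n k) : A.2 = 0 :=
  Prod.ext (funext fun i ↦ hA.2.2 i (by omega)) hA.2.1

end Normalization

theorem exists_invariant_normalization_condition_general (n k : ℕ) :
    ∃ N : Submodule ℝ (MT n k → MT n k → Gg n),
      N ≤ C2plus n k ∧
      (∀ A ∈ g0Sub n k, A.2 = 0 → ∀ ψ ∈ N, act2 n k A ψ ∈ N) ∧
      N = Submodule.span ℝ {ψ | ψ ∈ N ∧ ∃ w : ℤ, Homog2 n k w ψ} ∧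
      N ⊔ imDel n k = C2plus n k ∧
      Disjoint N (imDel n k) := by
  refine ⟨normalization n k, normalization_le_C2plus, ?_, normalization_eq_span,
    normalization_sup_imDel, disjoint_normalization_imDel⟩
  rintro ⟨a, v⟩ hA rfl ψ hψ
  exact act2_mem_normalization hA.1 hψ

/-- with the grading `wght Y = 1`, `wght H = wght E = 0`, `wght X = -1`,
`wght ε_i = -i`, `wght η = 5-2n` (the case `k = n-4`, so `m = span{X, ε_1,…,ε_{2n-6}, η}`
and `g⁰ = span{Y,H,E}`), there exists a linear invariant normalization condition for
`(m,g)`: a subspace `N ⊆ C²₊(m,g)`, invariant under the `g⁰`-action and spanned by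
weight-homogeneous elements, with `C²₊(m,g) = N ⊕ ∂(C¹₊(m,g))`. -/
theorem exists_invariant_normalization_condition (n : ℕ) (hn : 6 ≤ n) :
    ∃ N : Submodule ℝ (MT n (n-4) → MT n (n-4) → Gg n),
      N ≤ C2plus n (n-4) ∧
      (∀ A ∈ g0Sub n (n-4), ∀ ψ ∈ N, act2 n (n-4) A ψ ∈ N) ∧
      N = Submodule.span ℝ {ψ | ψ ∈ N ∧ ∃ w : ℤ, Homog2 n (n-4) w ψ} ∧
      N ⊔ imDel n (n-4) = C2plus n (n-4) ∧
      Disjoint N (imDel n (n-4)) :=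
  have ⟨N, hle, hact, hspan, hsup, hdisj⟩ :=
    exists_invariant_normalization_condition_general n (n - 4)
  ⟨N, hle, fun A hA ↦ hact A hA (snd_eq_zero_of_mem_g0Sub (by omega) hA), hspan, hsup, hdisj⟩
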